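/- arXiv:2212.10069 — 2 statements merged into one kernel-verified Lean document; each statement's English description precedes it below -/
import Mathlib

section
/- Let k ≥ 2, q ≥ 1, let w = 0^q (the word of q zeros), let s = s_{k,w}, and let n ≥ 2. Then for all N ≥ ⌈log_k(n)⌉ + 2, P_s^{(2)}(n,N) = n − 1. -/
/-!
Let `L = ⌈log_k n⌉`, so that a window of length `n` meets at most two consecutive blocks
`[a k^L, (a+1) k^L)`. The letters in a block with index `a ≥ 1` depend only on the offset, on the
number `zc k q a` of occurrences of `0^q` in `a`, and on the number of trailing zeros of `a`
capped at `q - 1` (`zc_block_transfer`); they lie between `zc k q a` and `zc k q a + L`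
(`zc_block_bounds`), and the last one is `zc k q a`.

`Pc1 a n N` is the number of factors with maximal letter exactly `N` (`Pc1_eq_ncard`). For
`N ≥ L + 2`, adding one to every letter is a bijection from the factors with maximum `N - 1` onto
the factors with maximum `N` that do not contain the letter `0`. Both directions come from
exhibiting a block index `b` such that the pair `(b, b + 1)` has the same trailing zeros as
`(a, a + 1)` and both counts shifted by one (`exists_pair_up`, `exists_pair_down`). For this, write
`a` as `c (k-1)^t`, with the last digit of `c` different from `k - 1`, and replace `c` by a number
with the prescribed count of `0^q` and the same end (`exists_realize`); only the cases where `c`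
or its replacement would be `0` require a change of `t`.

What remains are the factors with minimum `0` and maximum `N`. The spread `N ≥ L + 2` forces the
window to straddle a block boundary with `zc k q a = 0` and with a large count in `a + 1`; such a
window looks like one straddling `k^(N+q-1)` (`window_zero`). There are `n - 1` of these, and the
position of the letter `N` tells them apart.
-/

/-- Number of occurrences of `w` as a contiguous factor of `y`
(number of starting positions `0 ≤ i ≤ |y|-1` where `w` occurs). -/
def occ (w y : List ℕ) : ℕ :=
  ((List.range y.length).filter (fun i => w.isPrefixOf (y.drop i))).length

/-- Base-`k` representation of `m`, most significant digit first, with `(0)_k = 0`. -/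
def rep (k m : ℕ) : List ℕ := if m = 0 then [0] else (Nat.digits k m).reverse

/-- The `(k,w)`-digital sequence: number of occurrences of `w` in `(m)_k`. -/
def dseq (k : ℕ) (w : List ℕ) (m : ℕ) : ℕ := occ w (rep k m)

/-- The set of factors of length `n` of the sequence `a` all of whose letters are `≤ N`. -/
def factorSet (a : ℕ → ℕ) (n N : ℕ) : Set (List ℕ) :=
  { u | (∃ i, u = (List.range n).map fun j => a (i + j)) ∧ ∀ x ∈ u, x ≤ N }

/-- The `N`-factor complexity `P_a(n,N)`. -/
noncomputable def Pc (a : ℕ → ℕ) (n N : ℕ) : ℕ := Nat.card (factorSet a n N)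

/-- `F_a^{(1)}(n,N) = F_a(n,N) \ F_a(n,N-1)`. -/
def factorSet1 (a : ℕ → ℕ) (n N : ℕ) : Set (List ℕ) :=
  factorSet a n N \ factorSet a n (N - 1)

/-- First difference of the `N`-factor complexity in the variable `N`. -/
noncomputable def Pc1 (a : ℕ → ℕ) (n N : ℕ) : ℤ := (Pc a n N : ℤ) - (Pc a n (N - 1) : ℤ)

/-- Second difference of the `N`-factor complexity in the variable `N`. -/
noncomputable def Pc2 (a : ℕ → ℕ) (n N : ℕ) : ℤ := Pc1 a n N - Pc1 a n (N - 1)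

/-- The morphism `τ` on single letters: `τ(2i) = (2i)(2i+1)`, `τ(2i+1) = (2i+2)`. -/
def tauLetter (m : ℕ) : List ℕ := if m % 2 = 0 then [m, m + 1] else [m + 1]

/-- The morphism `τ` extended to finite words by concatenation. -/
def tauWord (u : List ℕ) : List ℕ := u.flatMap tauLetter

/-- Fibonacci numbers with `F_0 = F_1 = 1`. -/
def fibW : ℕ → ℕ
  | 0 => 1
  | 1 => 1
  | n + 2 => fibW (n + 1) + fibW n

/-- `φ(n) = max {k : F_k < n}`. -/
noncomputable def phi (n : ℕ) : ℕ := sSup {k | fibW k < n}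

/-- The infinite Fibonacci sequence `f = τ^∞(0)`: since `τ^{p}(0)` is a prefix of
`τ^{p+1}(0)` and `|τ^{n+1}(0)| = F_{n+2} > n`, the `n`-th letter of the fixed point is
the `n`-th letter of `τ^{n+1}(0)`. -/
def fibSeq (n : ℕ) : ℕ := (tauWord^[n + 1] [0]).getD n 0

/-- The set of factors of length `n` of a finite word `u` all of whose letters are `≤ N`. -/
def factorSetW (u : List ℕ) (n N : ℕ) : Set (List ℕ) :=
  { v | v.length = n ∧ v <:+: u ∧ ∀ x ∈ v, x ≤ N }

/-! ### Occurrences of `0^q` and the recursion for their number -/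

/-- Number of occurrences of `0^q` in the base-`k` representation of `m`, where the
representation of `0` is taken to be the empty word. -/
def zc (k q m : ℕ) : ℕ := occ (List.replicate q 0) (Nat.digits k m).reverse

lemma occ_nil (w : List ℕ) : occ w [] = 0 := by simp [occ]

lemma occ_cons (w y : List ℕ) (x : ℕ) :
    occ w (x :: y) = (if w <+: x :: y then 1 else 0) + occ w y := by
  unfold occ
  rw [List.length_cons, List.range_succ_eq_map, List.filter_cons]
  simp only [List.drop_zero, List.isPrefixOf_iff_prefix, List.filter_map]
  split_ifs
  · rw [List.length_cons, List.length_map, add_comm]; rfl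
  · rw [List.length_map, zero_add]; rfl

/-- Occurrences are counted by their starting position; peeling off the last letter
of the text removes exactly the occurrence that is a suffix. -/
lemma occ_concat (w y : List ℕ) (d : ℕ) (hw : w ≠ []) :
    occ w (y ++ [d]) = occ w y + if w <:+ y ++ [d] then 1 else 0 := by
  induction y with
  | nil =>
    rw [List.nil_append, occ_cons, occ_nil]
    have h1 : w <+: [d] ↔ w = [d] := by
      rw [List.prefix_cons_iff]; simp [hw]
    have h2 : w <:+ [d] ↔ w = [d] := by
      rw [List.suffix_cons_iff]; simp [hw]
    simp only [h1, h2]; omega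
  | cons x y ih =>
    rw [List.cons_append, occ_cons, occ_cons, ih]
    have h1 : w <+: x :: (y ++ [d]) ↔ w = x :: (y ++ [d]) ∨ w <+: x :: y := by
      rw [← List.cons_append, List.prefix_concat_iff]
    have h2 : w <:+ x :: (y ++ [d]) ↔ w = x :: (y ++ [d]) ∨ w <:+ y ++ [d] :=
      List.suffix_cons_iff
    have h3 : w = x :: (y ++ [d]) → ¬ w <+: x :: y := by
      rintro rfl h; have := h.length_le; simp at this
    have h4 : w = x :: (y ++ [d]) → ¬ w <:+ y ++ [d] := by
      rintro rfl h; have := h.length_le; simp at this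
    simp only [h1, h2]
    by_cases e : w = x :: (y ++ [d])
    · rw [if_pos (Or.inl e), if_pos (Or.inl e), if_neg (h3 e), if_neg (h4 e)]; omega
    · simp [e]; omega

lemma replicate_prefix_digits {k : ℕ} (hk : 2 ≤ k) (q m : ℕ) (hm : 0 < m) :
    List.replicate q 0 <+: Nat.digits k m ↔ k ^ q ∣ m := by
  induction q generalizing m with
  | zero => simp
  | succ q ih =>
    rw [Nat.digits_def' (by omega) hm, List.replicate_succ, List.cons_prefix_cons]
    constructor
    · rintro ⟨h1, h2⟩
      obtain ⟨c, rfl⟩ := Nat.dvd_of_mod_eq_zero h1.symm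
      rw [Nat.mul_div_cancel_left _ (by omega)] at h2
      rw [pow_succ']
      exact mul_dvd_mul_left _ ((ih c (Nat.pos_of_mul_pos_left hm)).1 h2)
    · intro h
      have hd : k ∣ m := (dvd_pow_self k (by omega)).trans h
      obtain ⟨c, rfl⟩ := hd
      refine ⟨by simp, ?_⟩
      rw [Nat.mul_div_cancel_left _ (by omega)]
      rw [pow_succ'] at h
      exact (ih c (Nat.pos_of_mul_pos_left hm)).2 (Nat.dvd_of_mul_dvd_mul_left (by omega) h)

lemma zc_zero (k q : ℕ) : zc k q 0 = 0 := by simp [zc, occ]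

lemma zc_rec {k q m : ℕ} (hk : 2 ≤ k) (hq : 1 ≤ q) (hm : 0 < m) :
    zc k q m = zc k q (m / k) + if k ^ q ∣ m then 1 else 0 := by
  have h := occ_concat (List.replicate q 0) (Nat.digits k (m / k)).reverse (m % k)
    (by simp; omega)
  have e : (Nat.digits k (m / k)).reverse ++ [m % k] = (Nat.digits k m).reverse := by
    rw [Nat.digits_def' (by omega) hm, List.reverse_cons]
  rw [e] at h
  have h2 : List.replicate q 0 <:+ (Nat.digits k m).reverse ↔ k ^ q ∣ m := by
    rw [← replicate_prefix_digits hk q m hm, ← List.reverse_prefix, List.reverse_reverse,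
      List.reverse_replicate]
  simp only [h2] at h
  exact h

lemma dseq_eq_zc {k q m : ℕ} (hm : 0 < m) : dseq k (List.replicate q 0) m = zc k q m := by
  simp [dseq, rep, zc, hm.ne']

lemma dseq_zero_le (k q : ℕ) : dseq k (List.replicate q 0) 0 ≤ 1 := by
  simp only [dseq, rep, if_true, occ]
  exact (List.length_filter_le _ _).trans (by simp)

/-! ### Arithmetic of the counting function -/

lemma mul_sub_one_facts {k x : ℕ} (hk : 2 ≤ k) (hx : 0 < x) :
    ¬ k ∣ x * k - 1 ∧ (x * k - 1) / k = x - 1 := by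
  obtain ⟨y, rfl⟩ : ∃ y, x = y + 1 := ⟨x - 1, by omega⟩
  have e : (y + 1) * k - 1 = (k - 1) + k * y := by
    rw [add_mul, mul_comm]; omega
  rw [e]
  constructor
  · rw [Nat.dvd_add_left (dvd_mul_right k y)]
    intro h; have := Nat.le_of_dvd (by omega) h; omega
  · rw [Nat.add_mul_div_left _ _ (by omega), Nat.div_eq_of_lt (by omega)]; omega

lemma not_pow_dvd {k q m : ℕ} (hq : 1 ≤ q) (h : ¬ k ∣ m) : ¬ k ^ q ∣ m :=
  fun h' => h ((dvd_pow_self k (by omega)).trans h')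

lemma zc_not_dvd {k q m : ℕ} (hk : 2 ≤ k) (hq : 1 ≤ q) (h : ¬ k ∣ m) :
    zc k q m = zc k q (m / k) := by
  rcases Nat.eq_zero_or_pos m with rfl | hm
  · simp
  · rw [zc_rec hk hq hm, if_neg (not_pow_dvd hq h), add_zero]

lemma pow_dvd_mul_pow {k y : ℕ} (hk : 2 ≤ k) (hy : ¬ k ∣ y) (e z : ℕ) :
    k ^ e ∣ y * k ^ z ↔ e ≤ z := by
  constructor
  · intro h
    by_contra hc
    have h1 : k ^ (z + 1) ∣ y * k ^ z := (pow_dvd_pow k (by omega)).trans h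
    rw [pow_succ'] at h1
    exact hy (Nat.dvd_of_mul_dvd_mul_right (by positivity) h1)
  · intro h
    exact (pow_dvd_pow k h).trans (dvd_mul_left _ _)

lemma zc_mul_pow {k q y : ℕ} (hk : 2 ≤ k) (hq : 1 ≤ q) (hy : ¬ k ∣ y) (z : ℕ) :
    zc k q (y * k ^ z) = zc k q y + (z + 1 - q) := by
  have hy0 : 0 < y := Nat.pos_of_ne_zero (by rintro rfl; simp at hy)
  induction z with
  | zero => simp; omega
  | succ z ih =>
    rw [zc_rec hk hq (by positivity)]
    have : y * k ^ (z + 1) / k = y * k ^ z := by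
      rw [pow_succ, ← mul_assoc, Nat.mul_div_cancel _ (by omega)]
    simp only [this, ih, pow_dvd_mul_pow hk hy]
    split_ifs <;> omega

lemma zc_one {k q : ℕ} (hk : 2 ≤ k) (hq : 1 ≤ q) : zc k q 1 = 0 := by
  rw [zc_not_dvd hk hq (by rw [Nat.dvd_one]; omega), Nat.div_eq_of_lt (by omega), zc_zero]

lemma zc_pow {k q : ℕ} (hk : 2 ≤ k) (hq : 1 ≤ q) (z : ℕ) : zc k q (k ^ z) = z + 1 - q := by
  have := zc_mul_pow hk hq (y := 1) (by rw [Nat.dvd_one]; omega) z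
  simpa [zc_one hk hq] using this

/-- Replacing the last digit `d ≠ k - 1` by `d + 1` destroys exactly the occurrence of `0^q`
at the end of `c`, if there is one. -/
lemma zc_succ {k q c : ℕ} (hk : 2 ≤ k) (hq : 1 ≤ q) (hc : 0 < c) (h : ¬ k ∣ c + 1) :
    zc k q (c + 1) + (if k ^ q ∣ c then 1 else 0) = zc k q c := by
  rw [zc_not_dvd hk hq h, Nat.succ_div_of_not_dvd h, ← zc_rec hk hq hc]

lemma zc_pred {k q x : ℕ} (hk : 2 ≤ k) (hq : 1 ≤ q) (hx : 0 < x) (t : ℕ) :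
    zc k q (x * k ^ t - 1) = zc k q (x - 1) := by
  induction t with
  | zero => simp
  | succ t ih =>
    have h := mul_sub_one_facts hk (x := x * k ^ t) (by positivity)
    rw [pow_succ, ← mul_assoc, zc_not_dvd hk hq h.1, h.2, ih]

lemma block_div {k : ℕ} (hk : 2 ≤ k) (a L r : ℕ) (hr : r < k ^ (L + 1)) :
    (a * k ^ (L + 1) + r) / k = a * k ^ L + r / k ∧ r / k < k ^ L := by
  constructor
  · rw [show a * k ^ (L + 1) + r = r + k * (a * k ^ L) by ring,
      Nat.add_mul_div_left _ _ (by omega), add_comm]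
  · rw [Nat.div_lt_iff_lt_mul (by omega), ← pow_succ]; exact hr

lemma zc_block_bounds {k q : ℕ} (hk : 2 ≤ k) (hq : 1 ≤ q) (a L r : ℕ) (hr : r < k ^ L) :
    zc k q a ≤ zc k q (a * k ^ L + r) ∧ zc k q (a * k ^ L + r) ≤ zc k q a + L := by
  induction L generalizing r with
  | zero => simp at hr; simp [hr]
  | succ L ih =>
    obtain ⟨h1, h2⟩ := block_div hk a L r hr
    have := ih _ h2
    rcases Nat.eq_zero_or_pos (a * k ^ (L + 1) + r) with h0 | h0
    · have : a = 0 := by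
        have := pow_pos (show 0 < k by omega) (L + 1)
        by_contra hh
        have : 0 < a * k ^ (L + 1) := Nat.mul_pos (by omega) this
        omega
      rw [h0, this, zc_zero]; omega
    · rw [zc_rec hk hq h0, h1]
      split_ifs <;> omega

/-- `a` and `b` have the same number of trailing zeros in base `k`, both numbers being capped
at `q - 1`. -/
def SameTail (k q a b : ℕ) : Prop := ∀ e < q, (k ^ e ∣ a ↔ k ^ e ∣ b)

lemma sameTail_of_dvd {k q a b : ℕ} (ha : k ^ (q - 1) ∣ a) (hb : k ^ (q - 1) ∣ b) :
    SameTail k q a b := fun _ he =>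
  ⟨fun _ => (pow_dvd_pow k (by omega)).trans hb, fun _ => (pow_dvd_pow k (by omega)).trans ha⟩

lemma sameTail_mul_pow {k q a b : ℕ} (hk : 2 ≤ k) (ha : ¬ k ∣ a) (hb : ¬ k ∣ b) (z : ℕ) :
    SameTail k q (a * k ^ z) (b * k ^ z) := fun e _ => by
  rw [pow_dvd_mul_pow hk ha, pow_dvd_mul_pow hk hb]

lemma sameTail_of_not_dvd {k q a b : ℕ} (hk : 2 ≤ k) (ha : ¬ k ∣ a) (hb : ¬ k ∣ b) :
    SameTail k q a b := by
  simpa using sameTail_mul_pow (q := q) hk ha hb 0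

lemma block_dvd {k q a b L r : ℕ} (hk : 2 ≤ k) (h : SameTail k q a b) (hL : 0 < L)
    (hr : r < k ^ L) (hd : k ^ q ∣ a * k ^ L + r) : k ^ q ∣ b * k ^ L + r := by
  rcases le_or_gt q L with hqL | hqL
  · have h1 : ∀ x, k ^ q ∣ x * k ^ L := fun x => (pow_dvd_pow k hqL).trans (dvd_mul_left _ _)
    exact (h1 b).add ((Nat.dvd_add_right (h1 a)).1 hd)
  · have h1 : k ^ L ∣ r :=
      (Nat.dvd_add_right (dvd_mul_left _ a)).1 ((pow_dvd_pow k hqL.le).trans hd)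
    have h2 : r = 0 := Nat.eq_zero_of_dvd_of_lt h1 hr
    have e : k ^ q = k ^ (q - L) * k ^ L := by rw [← pow_add]; congr 1; omega
    subst h2
    rw [add_zero, e] at hd ⊢
    have h3 := Nat.dvd_of_mul_dvd_mul_right (by positivity) hd
    exact Nat.mul_dvd_mul_right ((h _ (by omega)).1 h3) _

/-- Within a block, the letters are determined by the count and by the capped number of
trailing zeros of the block index. -/
lemma zc_block_transfer {k q a b : ℕ} (hk : 2 ≤ k) (hq : 1 ≤ q) (ha : 0 < a) (hb : 0 < b)
    (h : SameTail k q a b) (L r : ℕ) (hr : r < k ^ L) :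
    zc k q (a * k ^ L + r) + zc k q b = zc k q (b * k ^ L + r) + zc k q a := by
  induction L generalizing r with
  | zero => simp at hr; simp [hr]; omega
  | succ L ih =>
    obtain ⟨h1, h2⟩ := block_div hk a L r hr
    obtain ⟨h3, _⟩ := block_div hk b L r hr
    have := ih _ h2
    rw [zc_rec hk hq (m := a * k ^ (L + 1) + r) (by positivity),
      zc_rec hk hq (m := b * k ^ (L + 1) + r) (by positivity), h1, h3]
    have hd : k ^ q ∣ a * k ^ (L + 1) + r ↔ k ^ q ∣ b * k ^ (L + 1) + r :=
      ⟨block_dvd hk h (by omega) hr, block_dvd hk (fun e he => (h e he).symm) (by omega) hr⟩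
    simp only [hd]; omega

/-! ### Pairs of consecutive blocks -/

/-- The pairs of blocks `(a, a + 1)` and `(b, b + 1)` carry the same pattern, up to adding `x`
to every letter on the `a` side and `y` to every letter on the `b` side. -/
structure PairRel (k q a b x y : ℕ) : Prop where
  pos_left : 0 < a
  pos_right : 0 < b
  tail : SameTail k q a b
  tail_succ : SameTail k q (a + 1) (b + 1)
  count : zc k q a + x = zc k q b + y
  count_succ : zc k q (a + 1) + x = zc k q (b + 1) + y

lemma PairRel.window {k q a b x y : ℕ} (hk : 2 ≤ k) (hq : 1 ≤ q) (h : PairRel k q a b x y)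
    (L s : ℕ) (hs : s < 2 * k ^ L) :
    zc k q (a * k ^ L + s) + x = zc k q (b * k ^ L + s) + y := by
  rcases lt_or_ge s (k ^ L) with h1 | h1
  · have := zc_block_transfer hk hq h.pos_left h.pos_right h.tail L s h1
    have := h.count
    omega
  · have := zc_block_transfer hk hq (Nat.succ_pos a) (Nat.succ_pos b) h.tail_succ L (s - k ^ L)
      (by omega)
    have := h.count_succ
    have e : ∀ c, (c + 1) * k ^ L + (s - k ^ L) = c * k ^ L + s := fun c => by
      rw [add_mul]; omega
    rw [Nat.succ_eq_add_one, Nat.succ_eq_add_one, e, e] at *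
    omega

/-- Splitting off the maximal block of trailing digits `k - 1`: `a` has digits `c (k-1)^t` and
`a + 1` has digits `(c+1) 0^t`. -/
lemma exists_carry {k : ℕ} (hk : 2 ≤ k) (a : ℕ) :
    ∃ t c, a = (c + 1) * k ^ t - 1 ∧ ¬ k ∣ c + 1 := by
  obtain ⟨t, y, hy, he⟩ := Nat.exists_eq_pow_mul_and_not_dvd (n := a + 1) (by omega) k (by omega)
  have hy0 : y ≠ 0 := by rintro rfl; simp at hy
  refine ⟨t, y - 1, ?_, ?_⟩
  · rw [show y - 1 + 1 = y by omega, mul_comm, ← he]; omega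
  · rwa [show y - 1 + 1 = y by omega]

lemma zc_carry_succ {k q c : ℕ} (hk : 2 ≤ k) (hq : 1 ≤ q) (hc : ¬ k ∣ c + 1) (t : ℕ) :
    zc k q ((c + 1) * k ^ t - 1 + 1) = zc k q (c + 1) + (t + 1 - q) := by
  have : 0 < (c + 1) * k ^ t := by positivity
  rw [Nat.sub_add_cancel (by omega), zc_mul_pow hk hq hc]

lemma zc_carry {k q : ℕ} (hk : 2 ≤ k) (hq : 1 ≤ q) (c t : ℕ) :
    zc k q ((c + 1) * k ^ t - 1) = zc k q c := by
  rw [zc_pred hk hq (by omega)]; simp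

/-- Appending `t` digits `k - 1` to related numbers keeps them related. -/
lemma pairRel_carry {k q c d x y : ℕ} (hk : 2 ≤ k) (hq : 1 ≤ q) (hc : ¬ k ∣ c + 1)
    (hd : ¬ k ∣ d + 1) (h : PairRel k q c d x y) (t : ℕ) :
    PairRel k q ((c + 1) * k ^ t - 1) ((d + 1) * k ^ t - 1) x y := by
  have hp : 0 < k ^ t := by positivity
  have hl : ∀ u, 0 < u → 0 < (u + 1) * k ^ t - 1 := fun u hu => by
    have : u + 1 ≤ (u + 1) * k ^ t := Nat.le_mul_of_pos_right _ hp
    omega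
  have hs : ∀ u, (u + 1) * k ^ t - 1 + 1 = (u + 1) * k ^ t := fun u =>
    Nat.sub_add_cancel (Nat.mul_pos (by omega) hp)
  refine ⟨hl c h.pos_left, hl d h.pos_right, ?_, ?_, ?_, ?_⟩
  · rcases t with _ | t
    · simpa using h.tail
    · have e : ∀ u, ¬ k ∣ (u + 1) * k ^ (t + 1) - 1 := fun u => by
        rw [pow_succ, ← mul_assoc]; exact (mul_sub_one_facts hk (by positivity)).1
      exact sameTail_of_not_dvd hk (e c) (e d)
  · rw [hs, hs]; exact sameTail_mul_pow hk hc hd t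
  · rw [zc_carry hk hq, zc_carry hk hq]; exact h.count
  · rw [zc_carry_succ hk hq hc, zc_carry_succ hk hq hd]
    have := h.count_succ; omega

/-- A number whose last digit is not `k - 1` can be replaced by one with any prescribed count
`s` of `0^q` and the same behaviour at its end; `s ≥ 1` is forced when it ends in `0^q`. -/
lemma exists_realize {k q c : ℕ} (hk : 2 ≤ k) (hq : 1 ≤ q) (hc : 0 < c) (h : ¬ k ∣ c + 1)
    (s : ℕ) (hs : k ^ q ∣ c → 1 ≤ s) :
    ∃ d, 0 < d ∧ ¬ k ∣ d + 1 ∧ SameTail k q c d ∧ zc k q d = s ∧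
      zc k q (d + 1) + (if k ^ q ∣ c then 1 else 0) = s := by
  by_cases hd : k ^ q ∣ c
  · -- the digits `1 0^(q-1+s)`
    have hs := hs hd
    have hk1 : k ∣ k ^ (q - 1 + s) := dvd_pow_self k (by omega)
    have hn : ¬ k ∣ k ^ (q - 1 + s) + 1 := by
      rw [Nat.dvd_add_right hk1, Nat.dvd_one]; omega
    have hdv : k ^ q ∣ k ^ (q - 1 + s) := pow_dvd_pow k (by omega)
    have hz : zc k q (k ^ (q - 1 + s)) = s := by rw [zc_pow hk hq]; omega
    refine ⟨k ^ (q - 1 + s), by positivity, hn, ?_, hz, ?_⟩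
    · exact sameTail_of_dvd ((pow_dvd_pow k (by omega)).trans hd) (pow_dvd_pow k (by omega))
    · have := zc_succ hk hq (by positivity) hn
      rw [if_pos hdv, hz] at this
      rw [if_pos hd, this]
  · -- the digits `1 0^(q-1+s) u 0^z`, with `u` the last nonzero digit of `c`
    obtain ⟨z, y, hy, rfl⟩ := Nat.exists_eq_pow_mul_and_not_dvd (n := c) (by omega) k (by omega)
    rw [mul_comm] at *
    have hzq : z < q := by
      by_contra hh; exact hd ((pow_dvd_mul_pow hk hy q z).2 (by omega))
    set x := k ^ (q - 1 + s) * k + y % k with hx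
    have hxy : x % k = y % k := by simp [hx]
    have hxn : ¬ k ∣ x := by rwa [Nat.dvd_iff_mod_eq_zero, hxy, ← Nat.dvd_iff_mod_eq_zero]
    have hx0 : 0 < x := by positivity
    have hzx : zc k q x = s := by
      rw [zc_not_dvd hk hq hxn, hx, mul_comm, Nat.mul_add_div (by omega),
        Nat.div_eq_of_lt (Nat.mod_lt _ (by omega)), add_zero, zc_pow hk hq]
      omega
    have hz : zc k q (x * k ^ z) = s := by rw [zc_mul_pow hk hq hxn, hzx]; omega
    have hn : ¬ k ∣ x * k ^ z + 1 := by
      rw [Nat.dvd_iff_mod_eq_zero] at h ⊢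
      rwa [Nat.add_mod, Nat.mul_mod, hxy, ← Nat.mul_mod, ← Nat.add_mod]
    have hnd : ¬ k ^ q ∣ x * k ^ z := by rw [pow_dvd_mul_pow hk hxn]; omega
    refine ⟨x * k ^ z, by positivity, hn, sameTail_mul_pow hk hy hxn z, hz, ?_⟩
    have := zc_succ hk hq (by positivity) hn
    rw [if_neg hnd, hz] at this
    rw [if_neg hd, this]

lemma exists_pairRel {k q c x y : ℕ} (hk : 2 ≤ k) (hq : 1 ≤ q) (hc : 0 < c) (h : ¬ k ∣ c + 1)
    (hy : y ≤ zc k q c + x) (hs : k ^ q ∣ c → y + 1 ≤ zc k q c + x) (t : ℕ) :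
    ∃ b, PairRel k q ((c + 1) * k ^ t - 1) b x y := by
  obtain ⟨d, hd0, hd, htail, hz, hz1⟩ := exists_realize hk hq hc h (zc k q c + x - y)
    (fun hh => by have := hs hh; omega)
  have := zc_succ hk hq hc h
  exact ⟨_, pairRel_carry hk hq h hd
    ⟨hc, hd0, htail, sameTail_of_not_dvd hk h hd, by omega, by split_ifs at * <;> omega⟩ t⟩

lemma zc_le_succ {k q : ℕ} (hk : 2 ≤ k) (hq : 1 ≤ q) (a : ℕ) :
    zc k q a ≤ zc k q (a + 1) + 1 := by
  obtain ⟨t, c, rfl, hc⟩ := exists_carry hk a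
  rw [zc_carry hk hq, zc_carry_succ hk hq hc]
  rcases Nat.eq_zero_or_pos c with rfl | h0
  · rw [zc_zero]; omega
  · have := zc_succ hk hq h0 hc
    split_ifs at this <;> omega

lemma carry_zero_facts {k t : ℕ} (hk : 2 ≤ k) (ht : 1 ≤ t) :
    0 < k ^ t - 1 ∧ ¬ k ∣ k ^ t - 1 ∧ k ^ t - 1 + 1 = k ^ t := by
  have h1 : k ^ 1 ≤ k ^ t := Nat.pow_le_pow_right (by omega) ht
  rw [pow_one] at h1
  obtain ⟨u, rfl⟩ : ∃ u, t = u + 1 := ⟨t - 1, by omega⟩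
  refine ⟨by omega, ?_, by omega⟩
  rw [pow_succ]; exact (mul_sub_one_facts hk (by positivity)).1

/-- If `0^q` does not occur in `a` but occurs in `a + 1` then, as far as the letters are
concerned, `a` may be taken to be a power of `k` minus one. -/
lemma pairRel_pow {k q a : ℕ} (hk : 2 ≤ k) (hq : 1 ≤ q) (ha : zc k q a = 0)
    (h1 : 1 ≤ zc k q (a + 1)) :
    PairRel k q a (k ^ (zc k q (a + 1) + q - 1) - 1) 0 0 ∧ k ^ (q - 1) ∣ a + 1 := by
  obtain ⟨t, c, rfl, hc⟩ := exists_carry hk a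
  rw [zc_carry hk hq] at ha
  rw [zc_carry_succ hk hq hc] at h1 ⊢
  have hc1 : zc k q (c + 1) = 0 := by
    rcases Nat.eq_zero_or_pos c with rfl | h0
    · exact zc_one hk hq
    · have := zc_succ hk hq h0 hc; omega
  have ht : zc k q (c + 1) + (t + 1 - q) + q - 1 = t := by omega
  rw [ht]
  obtain ⟨f1, f2, f3⟩ := carry_zero_facts (t := t) hk (by omega)
  have hpos : 0 < (c + 1) * k ^ t := by positivity
  have hs : (c + 1) * k ^ t - 1 + 1 = (c + 1) * k ^ t := by omega
  have hdv : k ^ (q - 1) ∣ (c + 1) * k ^ t - 1 + 1 := by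
    rw [hs, pow_dvd_mul_pow hk hc]; omega
  refine ⟨⟨?_, f1, ?_, ?_, ?_, ?_⟩, hdv⟩
  · have : k ^ t ≤ (c + 1) * k ^ t := Nat.le_mul_of_pos_left _ (by omega)
    omega
  · refine sameTail_of_not_dvd hk ?_ f2
    obtain ⟨u, rfl⟩ : ∃ u, t = u + 1 := ⟨t - 1, by omega⟩
    rw [pow_succ, ← mul_assoc]; exact (mul_sub_one_facts hk (by positivity)).1
  · exact sameTail_of_dvd hdv (by rw [f3]; exact pow_dvd_pow k (by omega))
  · have := zc_carry hk hq 0 t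
    rw [zc_carry hk hq, ha]
    rw [zero_add, one_mul, zc_zero] at this
    omega
  · rw [zc_carry_succ hk hq hc, hc1, f3, zc_pow hk hq]; omega

/-- Some pair of blocks has the letters of the pair `(a, a + 1)` increased by one. -/
lemma exists_pair_up {k q a : ℕ} (hk : 2 ≤ k) (hq : 1 ≤ q)
    (h : 1 ≤ zc k q a ∨ 1 ≤ zc k q (a + 1)) : ∃ b, PairRel k q a b 1 0 := by
  obtain ⟨t, c, rfl, hc⟩ := exists_carry hk a
  rcases Nat.eq_zero_or_pos c with rfl | h0
  · -- here `a = k^t - 1`, and the digits of `b` are `1 0^q (k-1)^(t+1)`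
    rw [zc_carry hk hq, zc_carry_succ hk hq hc, zc_zero, zero_add, zc_one hk hq] at h
    have hkq : k ∣ k ^ q := dvd_pow_self k (by omega)
    have hn : ¬ k ∣ k ^ q + 1 := by
      rw [Nat.dvd_add_right hkq, Nat.dvd_one]; omega
    obtain ⟨f1, f2, f3⟩ := carry_zero_facts (t := t) hk (by omega)
    have hq1 : zc k q (k ^ q) = 1 := by rw [zc_pow hk hq]; omega
    have hz := zc_succ hk hq (by positivity) hn
    rw [hq1, if_pos dvd_rfl] at hz
    have hb : k ^ q * k ^ (t + 1) ≤ (k ^ q + 1) * k ^ (t + 1) - 1 := by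
      have : 0 < k ^ (t + 1) := by positivity
      rw [add_mul]; omega
    have hb0 : 0 < k ^ q * k ^ (t + 1) := by positivity
    have hcar := zc_carry hk hq 0 t
    have hcar1 := zc_carry_succ hk hq hc t
    rw [zero_add, one_mul] at *
    rw [zc_zero] at hcar
    rw [zc_one hk hq] at hcar1
    refine ⟨(k ^ q + 1) * k ^ (t + 1) - 1, f1, by omega, ?_, ?_, ?_, ?_⟩
    · refine sameTail_of_not_dvd hk f2 ?_
      rw [pow_succ, ← mul_assoc]; exact (mul_sub_one_facts hk (by positivity)).1
    · refine sameTail_of_dvd ?_ ?_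
      · rw [f3]; exact pow_dvd_pow k (by omega)
      · rw [Nat.sub_add_cancel (by omega), pow_dvd_mul_pow hk hn]; omega
    · rw [hcar, zc_carry hk hq, hq1]
    · rw [hcar1, zc_carry_succ hk hq hn]; omega
  · exact exists_pairRel hk hq h0 hc (by omega) (by omega) t

/-- Some pair of blocks has the letters of the pair `(a, a + 1)` decreased by one. -/
lemma exists_pair_down {k q a : ℕ} (hk : 2 ≤ k) (hq : 1 ≤ q) (h1 : 1 ≤ zc k q a)
    (h2 : 2 ≤ zc k q a ∨ 2 ≤ zc k q (a + 1)) : ∃ b, PairRel k q a b 0 1 := by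
  obtain ⟨t, c, rfl, hc⟩ := exists_carry hk a
  have h1' := h1
  have h2' := h2
  rw [zc_carry hk hq] at h1 h2
  rw [zc_carry_succ hk hq hc] at h2
  have h0 : 0 < c := Nat.pos_of_ne_zero (by rintro rfl; rw [zc_zero] at h1; omega)
  by_cases hs : k ^ q ∣ c → 2 ≤ zc k q c
  · exact exists_pairRel hk hq h0 hc (by omega) hs t
  · -- the only occurrence of `0^q` in `c` is at its end and disappears in `c + 1`;
    -- then `b = k^(t-1) - 1` works
    push Not at hs
    obtain ⟨hdv, hlt⟩ := hs
    have hz := zc_succ hk hq h0 hc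
    rw [if_pos hdv] at hz
    obtain ⟨f1, f2, f3⟩ := carry_zero_facts (t := t - 1) hk (by omega)
    have hcar := zc_carry hk hq 0 (t - 1)
    rw [zero_add, one_mul, zc_zero] at hcar
    have hpos : 0 < (c + 1) * k ^ t := by positivity
    refine ⟨k ^ (t - 1) - 1, ?_, f1, ?_, ?_, ?_, ?_⟩
    · have : c + 1 ≤ (c + 1) * k ^ t := Nat.le_mul_of_pos_right _ (by positivity)
      omega
    · refine sameTail_of_not_dvd hk ?_ f2
      obtain ⟨u, rfl⟩ : ∃ u, t = u + 1 := ⟨t - 1, by omega⟩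
      rw [pow_succ, ← mul_assoc]; exact (mul_sub_one_facts hk (by positivity)).1
    · refine sameTail_of_dvd ?_ ?_
      · rw [Nat.sub_add_cancel (by omega), pow_dvd_mul_pow hk hc]; omega
      · rw [f3]; exact pow_dvd_pow k (by omega)
    · rw [hcar, zc_carry hk hq]; omega
    · rw [zc_carry_succ hk hq hc, f3, zc_pow hk hq]; omega

/-! ### Windows of length at most `k ^ L` -/

/-- A window with a letter `≥ L + 1` does not start in the block of index `0`, where all letters
are small. In particular it avoids the index `0`, at which `dseq` and `zc` may differ. -/
lemma window_start {k q L n i : ℕ} (hk : 2 ≤ k) (hq : 1 ≤ q) (hL : 1 ≤ L) (hn : n ≤ k ^ L)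
    (h : ∃ j < n, L + 1 ≤ dseq k (List.replicate q 0) (i + j)) :
    ∃ a r, i = a * k ^ L + r ∧ 0 < a ∧ r < k ^ L := by
  have hp : 0 < k ^ L := by positivity
  refine ⟨i / k ^ L, i % k ^ L, (Nat.div_add_mod' i _).symm, ?_, Nat.mod_lt _ hp⟩
  by_contra hc
  have hi : i < k ^ L := by
    rcases Nat.div_eq_zero_iff.1 (Nat.eq_zero_of_not_pos hc) with h | h <;> omega
  obtain ⟨j, hj, hS⟩ := h
  rcases Nat.eq_zero_or_pos (i + j) with h0 | h0
  · rw [h0] at hS; have := dseq_zero_le k q; omega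
  · rw [dseq_eq_zc h0] at hS
    rcases lt_or_ge (i + j) (k ^ L) with h1 | h1
    · have := (zc_block_bounds hk hq 0 L (i + j) h1).2
      rw [zc_zero, zero_mul, zero_add] at this; omega
    · have := (zc_block_bounds hk hq 1 L (i + j - k ^ L) (by omega)).2
      rw [zc_one hk hq, one_mul, Nat.add_sub_cancel' h1] at this; omega

lemma pair_bounds {k q : ℕ} (hk : 2 ≤ k) (hq : 1 ≤ q) (a L s : ℕ) (hs : s < 2 * k ^ L) :
    (s < k ^ L ∧ zc k q a ≤ zc k q (a * k ^ L + s) ∧ zc k q (a * k ^ L + s) ≤ zc k q a + L) ∨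
    (k ^ L ≤ s ∧ zc k q (a + 1) ≤ zc k q (a * k ^ L + s) ∧
      zc k q (a * k ^ L + s) ≤ zc k q (a + 1) + L) := by
  rcases lt_or_ge s (k ^ L) with h1 | h1
  · exact Or.inl ⟨h1, zc_block_bounds hk hq a L s h1⟩
  · have := zc_block_bounds hk hq (a + 1) L (s - k ^ L) (by omega)
    rw [show (a + 1) * k ^ L + (s - k ^ L) = a * k ^ L + s by rw [add_mul]; omega] at this
    exact Or.inr ⟨h1, this⟩

lemma dseq_block {k q a : ℕ} (hk : 2 ≤ k) (ha : 0 < a) (L s : ℕ) :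
    dseq k (List.replicate q 0) (a * k ^ L + s) = zc k q (a * k ^ L + s) :=
  dseq_eq_zc (by positivity)

lemma window_up {k q L n i : ℕ} (hk : 2 ≤ k) (hq : 1 ≤ q) (hL : 1 ≤ L) (hn : n ≤ k ^ L)
    (h : ∃ j < n, L + 1 ≤ dseq k (List.replicate q 0) (i + j)) :
    ∃ i', ∀ j < n, dseq k (List.replicate q 0) (i' + j)
      = dseq k (List.replicate q 0) (i + j) + 1 := by
  obtain ⟨a, r, rfl, ha, hr⟩ := window_start hk hq hL hn h
  obtain ⟨j, hj, hS⟩ := h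
  rw [add_assoc, dseq_block hk ha] at hS
  have := pair_bounds hk hq a L (r + j) (by omega)
  obtain ⟨b, hb⟩ := exists_pair_up hk hq (a := a) (by omega)
  refine ⟨b * k ^ L + r, fun j hj => ?_⟩
  rw [add_assoc, add_assoc, dseq_block hk ha, dseq_block hk hb.pos_right]
  have := hb.window hk hq L (r + j) (by omega)
  omega

lemma window_down {k q L n i : ℕ} (hk : 2 ≤ k) (hq : 1 ≤ q) (hL : 1 ≤ L) (hn : n ≤ k ^ L)
    (h : ∃ j < n, L + 2 ≤ dseq k (List.replicate q 0) (i + j))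
    (hpos : ∀ j < n, 1 ≤ dseq k (List.replicate q 0) (i + j)) :
    ∃ i', ∀ j < n, dseq k (List.replicate q 0) (i' + j) + 1
      = dseq k (List.replicate q 0) (i + j) := by
  obtain ⟨a, r, rfl, ha, hr⟩ := window_start (q := q) (i := i) hk hq hL hn
    (by obtain ⟨j, hj, h⟩ := h; exact ⟨j, hj, by omega⟩)
  obtain ⟨j, hj, hS⟩ := h
  rw [add_assoc, dseq_block hk ha] at hS
  have hB := pair_bounds hk hq a L (r + j) (by omega)
  have h1 : 1 ≤ zc k q a := by
    rcases hB with hB | hB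
    · omega
    · -- the window contains the last index of the block `a`, whose letter is `zc k q a`
      have := hpos (k ^ L - 1 - r) (by omega)
      rw [add_assoc, dseq_block hk ha,
        show a * k ^ L + (r + (k ^ L - 1 - r)) = (a + 1) * k ^ L - 1 by rw [add_mul]; omega,
        zc_carry hk hq] at this
      exact this
  obtain ⟨b, hb⟩ := exists_pair_down hk hq h1 (by omega)
  refine ⟨b * k ^ L + r, fun j hj => ?_⟩
  rw [add_assoc, add_assoc, dseq_block hk ha, dseq_block hk hb.pos_right]
  have := hb.window hk hq L (r + j) (by omega)
  omega

/-- A window whose letters have minimum `0` and maximum `N ≥ L + 2` looks like one that straddles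
the index `k ^ (N + q - 1)`. -/
lemma window_zero {k q L n i N : ℕ} (hk : 2 ≤ k) (hq : 1 ≤ q) (hL : 1 ≤ L) (hn : n ≤ k ^ L)
    (hN : L + 2 ≤ N)
    (hle : ∀ j < n, dseq k (List.replicate q 0) (i + j) ≤ N)
    (hmax : ∃ j < n, dseq k (List.replicate q 0) (i + j) = N)
    (hmin : ∃ j < n, dseq k (List.replicate q 0) (i + j) = 0) :
    ∃ p, 1 ≤ p ∧ p < n ∧ ∀ j < n, dseq k (List.replicate q 0) (i + j)
      = dseq k (List.replicate q 0) (k ^ (N + q - 1) - p + j) := by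
  obtain ⟨a, r, rfl, ha, hr⟩ := window_start (q := q) (i := i) hk hq hL hn
    (by obtain ⟨j, hj, h⟩ := hmax; exact ⟨j, hj, by omega⟩)
  obtain ⟨j₀, hj₀, hS₀⟩ := hmax
  obtain ⟨j₁, hj₁, hS₁⟩ := hmin
  rw [add_assoc, dseq_block hk ha] at hS₀ hS₁
  have hB₀ := pair_bounds hk hq a L (r + j₀) (by omega)
  have hB₁ := pair_bounds hk hq a L (r + j₁) (by omega)
  have hdec := zc_le_succ hk hq a
  have hz : zc k q a = 0 := by omega
  have hright : k ^ L ≤ r + j₀ := by omega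
  obtain ⟨hrel, hdv⟩ := pairRel_pow hk hq hz (by omega)
  -- the first letter of the block `a + 1` is the largest of that block
  have hfirst : zc k q ((a + 1) * k ^ L) = zc k q (a + 1) + L := by
    have h := zc_block_transfer hk hq (Nat.succ_pos a) (b := k ^ (q - 1)) (by positivity)
      (sameTail_of_dvd hdv dvd_rfl) L 0 (by positivity)
    rw [Nat.succ_eq_add_one, add_zero, add_zero, ← pow_add, zc_pow hk hq, zc_pow hk hq] at h
    omega
  have hNeq : zc k q (a + 1) + L = N := by
    have := hle (k ^ L - r) (by omega)
    rw [add_assoc, dseq_block hk ha,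
      show a * k ^ L + (r + (k ^ L - r)) = (a + 1) * k ^ L by rw [add_mul]; omega] at this
    omega
  refine ⟨k ^ L - r, by omega, by omega, fun j hj => ?_⟩
  set b := k ^ (zc k q (a + 1) + q - 1) - 1 with hb
  have hpow : k ^ (N + q - 1) = (b + 1) * k ^ L := by
    have : 0 < k ^ (zc k q (a + 1) + q - 1) := by positivity
    rw [hb, Nat.sub_add_cancel this, ← pow_add]; congr 1; omega
  rw [hpow, show (b + 1) * k ^ L - (k ^ L - r) + j = b * k ^ L + (r + j) by rw [add_mul]; omega,
    add_assoc, dseq_block hk ha, dseq_block hk hrel.pos_right]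
  exact hrel.window hk hq L (r + j) (by omega)

/-- The letters around the index `k ^ (N + q - 1)`: those before it are `≤ L`, ending with `0`,
it carries the letter `N`, and those after it are `≤ N`. -/
lemma window_pow {k q L N : ℕ} (hk : 2 ≤ k) (hq : 1 ≤ q) (hN : L + 2 ≤ N) :
    k ^ L ≤ k ^ (N + q - 1) ∧
    dseq k (List.replicate q 0) (k ^ (N + q - 1)) = N ∧
    dseq k (List.replicate q 0) (k ^ (N + q - 1) - 1) = 0 ∧
    (∀ p, 1 ≤ p → p < k ^ L → dseq k (List.replicate q 0) (k ^ (N + q - 1) - p) ≤ L) ∧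
    (∀ p < k ^ L, dseq k (List.replicate q 0) (k ^ (N + q - 1) + p) ≤ N) := by
  set t := N - L + q - 1 with ht
  obtain ⟨f1, f2, f3⟩ := carry_zero_facts (t := t) hk (by omega)
  have hpow : k ^ (N + q - 1) = k ^ t * k ^ L := by rw [← pow_add]; congr 1; omega
  have hpow' : k ^ (N + q - 1) = (k ^ t - 1) * k ^ L + k ^ L := by
    rw [hpow]; nth_rewrite 1 [← f3]; ring
  have hz : zc k q (k ^ t - 1) = 0 := by
    have := zc_carry hk hq 0 t
    rwa [zero_add, one_mul, zc_zero] at this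
  have hp : 0 < k ^ L := by positivity
  refine ⟨by omega, ?_, ?_, fun p h1 h2 => ?_, fun p h2 => ?_⟩
  · rw [dseq_eq_zc (by positivity), zc_pow hk hq]; omega
  · have : 0 < (k ^ t - 1) * k ^ L := by positivity
    rw [dseq_eq_zc (by omega)]
    have := zc_carry hk hq 0 (N + q - 1)
    rwa [zero_add, one_mul, zc_zero] at this
  · rw [hpow', show (k ^ t - 1) * k ^ L + k ^ L - p = (k ^ t - 1) * k ^ L + (k ^ L - p) by omega,
      dseq_block hk f1]
    have := (zc_block_bounds hk hq (k ^ t - 1) L (k ^ L - p) (by omega)).2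
    omega
  · rw [hpow, dseq_block hk (by positivity)]
    have := (zc_block_bounds hk hq (k ^ t) L p h2).2
    rw [zc_pow hk hq] at this
    omega

/-! ### Counting factors -/

/-- The factor of length `n` of `a` at position `i`. -/
def win (a : ℕ → ℕ) (n i : ℕ) : List ℕ := (List.range n).map fun j => a (i + j)

lemma win_eq_iff {a b : ℕ → ℕ} {n i i' : ℕ} :
    win a n i = win b n i' ↔ ∀ j < n, a (i + j) = b (i' + j) := by
  simp [win, List.map_inj_left]

lemma mem_win {a : ℕ → ℕ} {n i x : ℕ} : x ∈ win a n i ↔ ∃ j < n, a (i + j) = x := by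
  simp [win]

lemma map_succ_win (a : ℕ → ℕ) (n i : ℕ) :
    (win a n i).map (· + 1) = win (fun m => a m + 1) n i := by
  simp [win, Function.comp_def]

lemma factorSet_finite (a : ℕ → ℕ) (n N : ℕ) : (factorSet a n N).Finite := by
  refine (List.finite_length_eq (Fin (N + 1)) n |>.image (List.map Fin.val)).subset ?_
  rintro u ⟨⟨i, rfl⟩, h⟩
  refine ⟨(List.range n).map fun j => Fin.ofNat (N + 1) (a (i + j)), by simp, ?_⟩
  simp only [List.map_map, List.map_inj_left, Function.comp_apply, Fin.val_ofNat]
  intro j hj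
  exact Nat.mod_eq_of_lt (Nat.lt_succ_of_le (h _ (List.mem_map_of_mem hj)))

lemma Pc1_eq_ncard (a : ℕ → ℕ) (n N : ℕ) : Pc1 a n N = (factorSet1 a n N).ncard := by
  have hsub : factorSet a n (N - 1) ⊆ factorSet a n N := fun u hu =>
    ⟨hu.1, fun x hx => (hu.2 x hx).trans (Nat.sub_le _ _)⟩
  have := Set.ncard_sdiff_add_ncard_of_subset hsub (factorSet_finite a n N)
  simp only [Pc1, Pc, Nat.card_coe_set_eq, factorSet1]
  omega

lemma mem_factorSet1 {a : ℕ → ℕ} {n N : ℕ} (hN : 1 ≤ N) {u : List ℕ} :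
    u ∈ factorSet1 a n N ↔
      ∃ i, u = win a n i ∧ (∀ j < n, a (i + j) ≤ N) ∧ ∃ j < n, a (i + j) = N := by
  constructor
  · rintro ⟨⟨⟨i, rfl⟩, h⟩, h'⟩
    have hle : ∀ j < n, a (i + j) ≤ N := fun j hj => h _ (mem_win.2 ⟨j, hj, rfl⟩)
    refine ⟨i, rfl, hle, ?_⟩
    by_contra hc
    push Not at hc
    refine h' ⟨⟨i, rfl⟩, fun x hx => ?_⟩
    obtain ⟨j, hj, rfl⟩ := mem_win.1 hx
    have := hle j hj
    have := hc j hj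
    omega
  · rintro ⟨i, rfl, hle, j, hj, hj'⟩
    refine ⟨⟨⟨i, rfl⟩, fun x hx => ?_⟩, fun h => ?_⟩
    · obtain ⟨j, hj, rfl⟩ := mem_win.1 hx
      exact hle j hj
    · have := h.2 _ (mem_win.2 ⟨j, hj, hj'⟩)
      omega

theorem stmt14 (k q : ℕ) (hk : 2 ≤ k) (hq : 1 ≤ q) (n : ℕ) (hn : 2 ≤ n)
    (N : ℕ) (hN : Nat.clog k n + 2 ≤ N) :
    Pc2 (dseq k (List.replicate q 0)) n N = (n : ℤ) - 1 := by
  set L := Nat.clog k n with hLdef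
  have hL : 1 ≤ L := Nat.clog_pos (by omega) hn
  have hnL : n ≤ k ^ L := Nat.le_pow_clog (by omega) n
  set S := dseq k (List.replicate q 0) with hS
  obtain ⟨hp0, hp1, hp2, hp3, hp4⟩ := window_pow (L := L) (N := N) hk hq hN
  rw [← hS] at hp1 hp2 hp3 hp4
  set K := k ^ (N + q - 1) with hK
  -- the letters of the window starting `p` places before `K`
  have hwin : ∀ p, 1 ≤ p → p < n → ∀ j < n,
      (j < p → S (K - p + j) ≤ L) ∧ S (K - p + j) ≤ N := by
    intro p h1 h2 j hj
    rcases lt_or_ge j p with h | h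
    · have := hp3 (p - j) (by omega) (by omega)
      rw [show K - (p - j) = K - p + j by omega] at this
      exact ⟨fun _ => this, by omega⟩
    · have := hp4 (j - p) (by omega)
      rw [show K + (j - p) = K - p + j by omega] at this
      exact ⟨fun h' => by omega, this⟩
  set E : Set (List ℕ) := (fun p => win S n (K - p)) '' (Finset.Icc 1 (n - 1) : Finset ℕ) with hE
  have hEcard : E.ncard = n - 1 := by
    rw [hE, Set.InjOn.ncard_image, Set.ncard_coe_finset, Nat.card_Icc]
    · omega
    · -- the first letter equal to `N` marks the position of `K` in the window
      have key : ∀ p p', 1 ≤ p → p < p' → p' < n → win S n (K - p) ≠ win S n (K - p') := by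
        intro p p' h1 h2 h3 he
        have := win_eq_iff.1 he p (by omega)
        rw [Nat.sub_add_cancel (by omega), hp1] at this
        have := (hwin p' (by omega) h3 p (by omega)).1 h2
        omega
      intro p hp p' hp' he
      rw [Finset.mem_coe, Finset.mem_Icc] at hp hp'
      rcases lt_trichotomy p p' with h | h | h
      · exact absurd he (key p p' (by omega) h (by omega))
      · exact h
      · exact absurd he.symm (key p' p (by omega) h (by omega))
  have hdecomp : factorSet1 S n N = List.map (· + 1) '' factorSet1 S n (N - 1) ∪ E := by
    ext u
    constructor
    · intro hu
      obtain ⟨i, rfl, hle, j, hj, hj'⟩ := (mem_factorSet1 (by omega)).1 hu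
      by_cases h0 : ∃ j < n, S (i + j) = 0
      · right
        obtain ⟨p, h1, h2, h3⟩ := window_zero hk hq hL hnL hN hle ⟨j, hj, hj'⟩ h0
        refine ⟨p, ?_, (win_eq_iff.2 h3).symm⟩
        rw [Finset.mem_coe, Finset.mem_Icc]; omega
      · left
        push Not at h0
        obtain ⟨i', hi'⟩ := window_down (q := q) (i := i) hk hq hL hnL
          ⟨j, hj, by rw [← hS, hj']; exact hN⟩
          (fun j hj => Nat.one_le_iff_ne_zero.2 (h0 j hj))
        rw [← hS] at hi'
        refine ⟨win S n i', (mem_factorSet1 (by omega)).2 ⟨i', rfl, ?_, j, hj, ?_⟩, ?_⟩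
        · intro j hj
          have := hi' j hj; have := hle j hj; omega
        · have := hi' j hj; omega
        · rw [map_succ_win, win_eq_iff]; exact hi'
    · rintro (⟨v, hv, rfl⟩ | ⟨p, hp, rfl⟩)
      · obtain ⟨i, rfl, hle, j, hj, hj'⟩ := (mem_factorSet1 (by omega)).1 hv
        obtain ⟨i', hi'⟩ := window_up (q := q) (i := i) hk hq hL hnL
          ⟨j, hj, by rw [← hS, hj']; omega⟩
        rw [← hS] at hi'
        refine (mem_factorSet1 (by omega)).2 ⟨i', ?_, ?_, j, hj, ?_⟩
        · rw [map_succ_win, win_eq_iff]; exact fun j hj => (hi' j hj).symm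
        · intro j hj
          have := hi' j hj; have := hle j hj; omega
        · have := hi' j hj; omega
      · rw [Finset.mem_coe, Finset.mem_Icc] at hp
        refine (mem_factorSet1 (by omega)).2 ⟨K - p, rfl, ?_, p, by omega, ?_⟩
        · exact fun j hj => (hwin p (by omega) (by omega) j hj).2
        · rw [Nat.sub_add_cancel (by omega), hp1]
  have hfin : ∀ M, (factorSet1 S n M).Finite := fun M => (factorSet_finite S n M).sdiff
  -- only the words of `E` contain the letter `0`
  have hdisj : Disjoint (List.map (· + 1) '' factorSet1 S n (N - 1)) E := by
    rw [Set.disjoint_left]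
    rintro _ ⟨v, _, rfl⟩ ⟨p, hp, he⟩
    rw [Finset.mem_coe, Finset.mem_Icc] at hp
    have h0 : 0 ∈ win S n (K - p) := mem_win.2 ⟨p - 1, by omega, by
      rw [show K - p + (p - 1) = K - 1 by omega, hp2]⟩
    simp only at he
    rw [he] at h0
    simp at h0
  have hcard := Set.ncard_union_eq hdisj ((hfin _).image _) (Set.toFinite _)
  rw [← hdecomp, hEcard, Set.ncard_image_of_injective _
    (List.map_injective_iff.2 (add_left_injective 1))] at hcard
  rw [Pc2, Pc1_eq_ncard, Pc1_eq_ncard, hcard]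
  omega
end

section
/- Let k ≥ 2, let α be a nonempty word over Σ_k, and let w be a nonempty word over Σ_k with w ∉ {0}* ∪ {k−1}*. Suppose the number of occurrences of w in α is r > 0, and write α = x w z where the prefix x w contains exactly one occurrence of w (i.e. w occurs for the first time in α ending at position |x w|). Then the number of occurrences of the digit 0 in z is at most |z| − r + 1, and the number of occurrences of the digit k−1 in z is at most |z| − r + 1. -/
theorem occ_eq_card (w y : List ℕ) :
    occ w y = ((Finset.range y.length).filter (fun i => w <+: y.drop i)).card := by
  unfold occ
  rw [← List.toFinset_card_of_nodup (List.nodup_range.filter _)]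
  congr 1
  ext i
  simp

theorem count_add_card_ne (c : ℕ) (z : List ℕ) :
    z.count c + ((Finset.range z.length).filter (fun j => z[j]? ≠ some c)).card = z.length := by
  induction z using List.reverseRecOn with
  | nil => simp
  | append_singleton z a ih =>
    have h : (Finset.range z.length).filter (fun j => (z ++ [a])[j]? ≠ some c)
        = (Finset.range z.length).filter (fun j => z[j]? ≠ some c) := by
      apply Finset.filter_congr
      intro j hj
      rw [List.getElem?_append_left (Finset.mem_range.1 hj)]
    rw [List.length_append, List.length_singleton, Finset.range_add_one, Finset.filter_insert, h]
    by_cases hac : a = c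
    · simp [hac] at ih ⊢
      omega
    · simp [hac] at ih ⊢
      omega

/-- A word that is not a power of `c` splits at its last letter other than `c`. -/
theorem exists_last_ne (c : ℕ) (w : List ℕ) (h : ¬ ∀ d ∈ w, d = c) :
    ∃ u d v, w = u ++ d :: v ∧ d ≠ c ∧ ∀ e ∈ v, e = c := by
  induction w with
  | nil => simp at h
  | cons a w ih =>
    by_cases hw : ∀ d ∈ w, d = c
    · refine ⟨[], a, w, rfl, ?_, hw⟩
      rintro rfl
      exact h (by simpa using hw)
    · obtain ⟨u, d, v, rfl, hd, hv⟩ := ih hw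
      exact ⟨a :: u, d, v, rfl, hd, hv⟩

/-- The claimed bound for any single letter `c` of which `w` is not a power. -/
theorem count_add_occ_le (c : ℕ) (x w z : List ℕ) (hnc : ¬ ∀ d ∈ w, d = c)
    (hfirst : occ w (x ++ w) = 1) :
    z.count c + occ w (x ++ w ++ z) ≤ z.length + 1 := by
  obtain ⟨u, d, v, hwe, hd, hv⟩ := exists_last_ne c w hnc
  have hlen : w.length = u.length + 1 + v.length := by
    rw [hwe]; simp; omega
  have hz := count_add_card_ne c z
  rw [occ_eq_card] at hfirst ⊢
  set S := (Finset.range (x ++ w ++ z).length).filter (fun i => w <+: (x ++ w ++ z).drop i) with hS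
  have hsplit := Finset.card_filter_add_card_filter_not (s := S) (fun i => i ≤ x.length)
  have hA : (S.filter (fun i => i ≤ x.length)).card ≤ 1 := by
    rw [← hfirst]
    apply Finset.card_le_card
    intro i hi
    simp only [hS, Finset.mem_filter, Finset.mem_range] at hi ⊢
    obtain ⟨⟨_, hp⟩, hix⟩ := hi
    have hl : i < (x ++ w).length := by simp; omega
    refine ⟨hl, ?_⟩
    rw [List.drop_append_of_le_length hl.le] at hp
    exact List.prefix_of_prefix_length_le hp (List.prefix_append _ _) (by simp; omega)
  have hB : (S.filter (fun i => ¬ i ≤ x.length)).card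
      ≤ ((Finset.range z.length).filter (fun j => z[j]? ≠ some c)).card := by
    have key : ∀ i ∈ S.filter (fun i => ¬ i ≤ x.length),
        (x ++ w).length ≤ i + u.length ∧ z[i + u.length - (x ++ w).length]? = some d := by
      intro i hi
      simp only [hS, Finset.mem_filter, Finset.mem_range] at hi
      obtain ⟨⟨_, t, ht⟩, hix⟩ := hi
      have hlet : (x ++ w ++ z)[i + u.length]? = some d := by
        rw [← List.getElem?_drop, ← ht, hwe]
        simp
      by_cases hlt : i + u.length < (x ++ w).length
      · -- The position would fall in the block `v` of letters `c` that ends the first occurrence.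
        exfalso
        rw [List.getElem?_append_left hlt, List.getElem?_append_right (by omega), hwe,
          List.getElem?_append_right (by omega)] at hlet
        obtain ⟨m, hm⟩ : ∃ m, i + u.length - x.length - u.length = m + 1 :=
          ⟨i - x.length - 1, by omega⟩
        rw [hm, List.getElem?_cons_succ] at hlet
        exact hd (hv d (List.mem_of_getElem? hlet))
      · rw [List.getElem?_append_right (by omega)] at hlet
        exact ⟨by omega, hlet⟩
    apply Finset.card_le_card_of_injOn (fun i => i + u.length - (x ++ w).length)
    · intro i hi
      obtain ⟨_, h2⟩ := key i hi
      obtain ⟨hl, _⟩ := List.getElem?_eq_some_iff.1 h2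
      simp only [Finset.coe_filter, Finset.mem_range, Set.mem_ofPred_eq]
      exact ⟨hl, by rw [h2]; simpa using hd⟩
    · intro i hi j hj hij
      have h1 := (key i hi).1
      have h2 := (key j hj).1
      simp only at hij
      omega
  omega

theorem stmt17 (k : ℕ) (hk : 2 ≤ k) (α x w z : List ℕ) (hα : α ≠ [])
    (hαk : ∀ d ∈ α, d < k) (hw : w ≠ []) (hwk : ∀ d ∈ w, d < k)
    (hnp : ¬ ((∀ d ∈ w, d = 0) ∨ (∀ d ∈ w, d = k - 1)))
    (r : ℕ) (hr : occ w α = r) (hrpos : 0 < r)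
    (hsplit : α = x ++ w ++ z) (hfirst : occ w (x ++ w) = 1) :
    z.count 0 + r ≤ z.length + 1 ∧ z.count (k - 1) + r ≤ z.length + 1 := by
  subst hr hsplit
  rw [not_or] at hnp
  exact ⟨count_add_occ_le 0 x w z hnp.1 hfirst, count_add_occ_le (k - 1) x w z hnp.2 hfirst⟩
end
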